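/- Let m > n be positive integers, φ_{n,m}: ℙⁿ → ℙᵐ be the embedding sending (a₀ : … : aₙ) to (a₀ : … : aₙ : 0 : … : 0), let P ∈ ℙⁿ with defining homogeneous prime ideal ℘ ⊂ K[X₀,…,Xₙ], let 𝔮 ⊂ K[X₀,…,Xₘ] be the defining homogeneous prime ideal of φ_{n,m}(P), and let r be a positive integer. Then ℘ʳ = 𝔮ʳ ∩ K[X₀,…,Xₙ], where K[X₀,…,Xₙ] is viewed as a subring of K[X₀,…,Xₘ]. -/

import Mathlib

open MvPolynomial

/-- The defining homogeneous prime ideal in `K[X₀,…,X_{N-1}]` of the point of projective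
space with homogeneous coordinate vector `a : Fin N → K`: it is generated by the linear
forms vanishing at `a`. -/
noncomputable def pointIdeal {K : Type} [Field K] {N : ℕ} (a : Fin N → K) :
    Ideal (MvPolynomial (Fin N) K) :=
  Ideal.span {l : MvPolynomial (Fin N) K |
    MvPolynomial.IsHomogeneous l 1 ∧ MvPolynomial.eval a l = 0}

/-- Homogeneous coordinates of the image of the point `a ∈ ℙⁿ` under the embedding
`φ_{n,m} : ℙⁿ → ℙᵐ`, `(a₀ : ⋯ : aₙ) ↦ (a₀ : ⋯ : aₙ : 0 : ⋯ : 0)`. -/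
def extendPoint {K : Type} [Field K] {n : ℕ} (m : ℕ) (a : Fin (n + 1) → K) :
    Fin (m + 1) → K :=
  fun i => if h : (i : ℕ) < n + 1 then a ⟨i, h⟩ else 0

/-- The substitution `X_{n+1} = ⋯ = X_m = 0`, as a `K`-algebra map
`K[X₀,…,X_m] → K[X₀,…,X_n]`. -/
noncomputable def setTailZero (K : Type) [Field K] (n m : ℕ) :
    MvPolynomial (Fin (m + 1)) K →ₐ[K] MvPolynomial (Fin (n + 1)) K :=
  MvPolynomial.aeval fun i : Fin (m + 1) =>
    if h : (i : ℕ) < n + 1 then MvPolynomial.X (⟨i, h⟩ : Fin (n + 1)) else 0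

/-- The inclusion `K[X₀,…,X_n] ⊆ K[X₀,…,X_m]` (as a ring map). -/
noncomputable def polyIncl (K : Type) [Field K] {n m : ℕ} (h : n ≤ m) :
    MvPolynomial (Fin (n + 1)) K →ₐ[K] MvPolynomial (Fin (m + 1)) K :=
  MvPolynomial.rename (Fin.castLE (Nat.succ_le_succ h))

/-- The degree-`t` homogeneous part `[I]_t` of an ideal, as a `K`-subspace. -/
noncomputable def degPart {K : Type} [Field K] {N : ℕ}
    (I : Ideal (MvPolynomial (Fin N) K)) (t : ℕ) :
    Submodule K (MvPolynomial (Fin N) K) :=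
  Submodule.restrictScalars K I ⊓ MvPolynomial.homogeneousSubmodule (Fin N) K t

/-- The Hilbert function `H_{R/I}(t) = dim_K (R/I)_t` of the quotient by a homogeneous
ideal `I`, computed as the dimension of the image of the degree-`t` part of `R` in `R/I`. -/
noncomputable def hilb {K : Type} [Field K] {N : ℕ}
    (I : Ideal (MvPolynomial (Fin N) K)) (t : ℕ) : ℕ :=
  Module.finrank K ((MvPolynomial.homogeneousSubmodule (Fin N) K t).map
    (Ideal.Quotient.mkₐ K I).toLinearMap)

/-- The regularity index of `R/I`: the least `t` from which the Hilbert function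
`H_{R/I}` is constant. -/
noncomputable def regIndex {K : Type} [Field K] {N : ℕ}
    (I : Ideal (MvPolynomial (Fin N) K)) : ℕ :=
  sInf {t : ℕ | ∀ t', t ≤ t' → hilb I t' = hilb I t}

/-! The inclusion `K[X₀,…,Xₙ] ⊆ K[X₀,…,Xₘ]` and the substitution `X_{n+1} = ⋯ = X_m = 0` both
send variables to linear forms (or zero) and are compatible with evaluation at the points `P` and
`φ_{n,m}(P)`. Each therefore carries one point ideal into the other, hence also the `r`-th powers.
As the substitution is a retraction of the inclusion, a polynomial of `K[X₀,…,Xₙ]` lying in `𝔮ʳ` is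
its own image under the substitution and so lies in `℘ʳ`. -/

theorem comap_pow_eq_pow_of_leftInverse {R S : Type*} [CommSemiring R] [CommSemiring S]
    {f : R →+* S} {g : S →+* R} (hgf : Function.LeftInverse g f) {I : Ideal R} {J : Ideal S}
    (hf : I.map f ≤ J) (hg : J.map g ≤ I) (r : ℕ) : (J ^ r).comap f = I ^ r := by
  apply le_antisymm
  · intro x hx
    have hgfx : g (f x) ∈ (J ^ r).map g := Ideal.mem_map_of_mem g (Ideal.mem_comap.1 hx)
    rw [hgf x, Ideal.map_pow] at hgfx
    exact Ideal.pow_right_mono hg r hgfx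
  · rw [← Ideal.map_le_iff_le_comap, Ideal.map_pow]
    exact Ideal.pow_right_mono hf r

section

variable {K : Type} [Field K]

theorem map_pointIdeal_le {M N : ℕ} {a : Fin M → K} {b : Fin N → K}
    (φ : MvPolynomial (Fin M) K →ₐ[K] MvPolynomial (Fin N) K)
    (hφ : ∀ i, (φ (X i)).IsHomogeneous 1) (hab : ∀ i, eval b (φ (X i)) = a i) :
    (pointIdeal a).map (φ : MvPolynomial (Fin M) K →+* MvPolynomial (Fin N) K) ≤
      pointIdeal b := by
  have eval_comp : (aeval b).comp φ = aeval a := algHom_ext fun i => by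
    simpa [aeval_eq_eval] using hab i
  rw [pointIdeal, Ideal.map_span, Ideal.span_le]
  rintro _ ⟨l, ⟨hl, hla⟩, rfl⟩
  refine Ideal.subset_span ⟨?_, ?_⟩
  · rw [aeval_unique φ]
    exact hl.aeval _ hφ
  · rw [← hla]
    exact DFunLike.congr_fun eval_comp l

variable {n m : ℕ}

theorem polyIncl_X (h : n ≤ m) (i : Fin (n + 1)) :
    polyIncl K h (X i) = X (Fin.castLE (Nat.succ_le_succ h) i) :=
  rename_X _ i

theorem extendPoint_castLE (h : n ≤ m) (a : Fin (n + 1) → K) (i : Fin (n + 1)) :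
    extendPoint m a (Fin.castLE (Nat.succ_le_succ h) i) = a i :=
  dif_pos i.isLt

theorem setTailZero_X_castLE (h : n ≤ m) (i : Fin (n + 1)) :
    setTailZero K n m (X (Fin.castLE (Nat.succ_le_succ h) i)) = X i :=
  (aeval_X _ _).trans (dif_pos i.isLt)

theorem isHomogeneous_setTailZero_X (i : Fin (m + 1)) :
    (setTailZero K n m (X i)).IsHomogeneous 1 := by
  rw [setTailZero, aeval_X]
  split_ifs
  · exact isHomogeneous_X _ _
  · exact isHomogeneous_zero _ _ _

theorem eval_setTailZero_X (a : Fin (n + 1) → K) (i : Fin (m + 1)) :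
    eval a (setTailZero K n m (X i)) = extendPoint m a i := by
  rw [setTailZero, aeval_X, extendPoint]
  split_ifs
  · exact eval_X _
  · exact map_zero _

theorem leftInverse_setTailZero_polyIncl (h : n ≤ m) :
    Function.LeftInverse (setTailZero K n m) (polyIncl K h) := by
  have comp_eq_id : (setTailZero K n m).comp (polyIncl K h) = AlgHom.id K _ :=
    algHom_ext fun i => by
      rw [AlgHom.comp_apply, polyIncl_X h, setTailZero_X_castLE h, AlgHom.id_apply]
  exact DFunLike.congr_fun comp_eq_id

theorem map_polyIncl_pointIdeal_le (h : n ≤ m) (a : Fin (n + 1) → K) :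
    (pointIdeal a).map (polyIncl K h : _ →+* MvPolynomial (Fin (m + 1)) K) ≤
      pointIdeal (extendPoint m a) :=
  map_pointIdeal_le _ (fun i => by rw [polyIncl_X h]; exact isHomogeneous_X K _) fun i => by
    rw [polyIncl_X h, eval_X, extendPoint_castLE h]

theorem map_setTailZero_pointIdeal_le (m : ℕ) (a : Fin (n + 1) → K) :
    (pointIdeal (extendPoint m a)).map
      (setTailZero K n m : _ →+* MvPolynomial (Fin (n + 1)) K) ≤ pointIdeal a :=
  map_pointIdeal_le _ isHomogeneous_setTailZero_X (eval_setTailZero_X a)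

end

theorem stmt5_general (K : Type) [Field K] (n m : ℕ) (hnm : n ≤ m)
    (a : Fin (n + 1) → K) (r : ℕ) :
    pointIdeal a ^ r = Ideal.comap (polyIncl K hnm) (pointIdeal (extendPoint m a) ^ r) :=
  (comap_pow_eq_pow_of_leftInverse (leftInverse_setTailZero_polyIncl hnm)
    (map_polyIncl_pointIdeal_le hnm a) (map_setTailZero_pointIdeal_le m a) r).symm

theorem stmt5 (K : Type) [Field K] [IsAlgClosed K] (n m : ℕ) (hnm : n < m)
    (a : Fin (n + 1) → K) (ha : a ≠ 0) (r : ℕ) (hr : 0 < r) :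
    pointIdeal a ^ r =
      Ideal.comap (polyIncl K hnm.le) (pointIdeal (extendPoint m a) ^ r) :=
  stmt5_general K n m hnm.le a r
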